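/- (Lemma 4, Set Equivalence 2) For every q ∈ Q, A*_{q|g} = B*_{q|g}, where A*_{q|g} is the set of allocators in A*_q maximizing the sufficient explainable performance t̄'_g over A*_q, and B*_{q|g} is the set of allocators a ∈ A*_q whose crossing set C_{2,0}(a) is empty. -/

import Mathlib

/-!
Write `w = sg - sb`. Up to a constant, `tbar` is the linear functional `∑ w a`, so everything rests
on linear functionals on the 0/1 vectors of fixed sum. Exchanging the values of `a` at two indices
`i`, `j` keeps the sum and changes `∑ f a` by `(f i - f j) * (a j - a i)` (`sum_mul_swap`).

If `a` has a crossing `(i, j)`, the exchange leaves `∑ w a` unchanged, since `w` vanishes on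
`Z_0` and `Z_2`, but raises `∑ sg a`; so `a` does not maximize `tbarg`.

Conversely, optimality of `a` under exchanges says that `w` is at least as large at every allocated
index as at every unallocated one. Without crossings the same holds for `w + sg`, which takes
the values `2, 1, 0, -1` on `Z_g, Z_2, Z_0, Z_b`. A vector ordered in this way is separated by a
threshold, so `a` maximizes `∑ (w + sg) a` (`sum_mul_le_of_ordered`); as all elements of `A*_q`
share the same `∑ w a`, it maximizes `∑ sg a` among them.
-/

open Finset

/-- `a` is a q-explainable allocator. -/
def isQAlloc (n : ℕ) (q : ℝ) (a : Fin n → ℝ) : Prop :=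
  (∀ i, a i = 0 ∨ a i = 1) ∧ (1 / (n : ℝ)) * ∑ i, a i = q

/-- Sufficient ensemble performance t̄'. -/
noncomputable def tbar (n : ℕ) (sg sb a : Fin n → ℝ) : ℝ :=
  (1 / (n : ℝ)) * ∑ i, (sg i * a i + sb i * (1 - a i))

/-- Sufficient explainable performance t̄'_g. -/
noncomputable def tbarg (n : ℕ) (sg a : Fin n → ℝ) : ℝ :=
  (1 / (n : ℝ)) * ∑ i, sg i * a i

/-- i ∈ Z_g : only the glass box is sufficient. -/
def inZg (n : ℕ) (sg sb : Fin n → ℝ) (i : Fin n) : Prop := sg i = 1 ∧ sb i = 0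

/-- i ∈ Z_b : only the black box is sufficient. -/
def inZb (n : ℕ) (sg sb : Fin n → ℝ) (i : Fin n) : Prop := sg i = 0 ∧ sb i = 1

/-- i ∈ Z_2 : both models are sufficient. -/
def inZ2 (n : ℕ) (sg sb : Fin n → ℝ) (i : Fin n) : Prop := sg i = 1 ∧ sb i = 1

/-- i ∈ Z_0 : neither model is sufficient. -/
def inZ0 (n : ℕ) (sg sb : Fin n → ℝ) (i : Fin n) : Prop := sg i = 0 ∧ sb i = 0

/-- i ∈ Z_02 = Z_0 ∪ Z_2. -/
def inZ02 (n : ℕ) (sg sb : Fin n → ℝ) (i : Fin n) : Prop :=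
  inZ0 n sg sb i ∨ inZ2 n sg sb i

/-- Membership in A*_q: a q-explainable allocator maximizing t̄' over A_q. -/
def memAstar (n : ℕ) (q : ℝ) (sg sb a : Fin n → ℝ) : Prop :=
  isQAlloc n q a ∧ ∀ b : Fin n → ℝ, isQAlloc n q b → tbar n sg sb b ≤ tbar n sg sb a

/-- Effect on a linear functional of exchanging the values of `a` at `i` and `j`. -/
lemma sum_mul_swap {n : ℕ} (f a : Fin n → ℝ) (i j : Fin n) :
    ∑ k, f k * a (Equiv.swap i j k) = ∑ k, f k * a k + (f i - f j) * (a j - a i) := by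
  have h : ∀ k, f k * a (Equiv.swap i j k) = f k * a k +
      ((if k = i then f i * (a j - a i) else 0) + (if k = j then f j * (a i - a j) else 0)) := by
    intro k
    rw [Equiv.swap_apply_def]
    split_ifs <;> subst_vars <;> ring
  simp only [h, sum_add_distrib, sum_ite_eq', mem_univ, if_true]
  ring

lemma isQAlloc_swap {n : ℕ} {q : ℝ} {a : Fin n → ℝ} (ha : isQAlloc n q a) (i j : Fin n) :
    isQAlloc n q (fun k => a (Equiv.swap i j k)) :=
  ⟨fun k => ha.1 _, by rw [Equiv.sum_comp (Equiv.swap i j) a]; exact ha.2⟩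

lemma tbar_eq (n : ℕ) (sg sb a : Fin n → ℝ) :
    tbar n sg sb a = (1 / (n : ℝ)) * (∑ k, (sg k - sb k) * a k + ∑ k, sb k) := by
  unfold tbar
  rw [← sum_add_distrib]
  congr 1
  exact sum_congr rfl fun k _ => by ring

/-- A 0/1 vector whose allocated indices carry the largest weights maximizes the weighted sum among
0/1 vectors of the same sum. -/
lemma sum_mul_le_of_ordered {n : ℕ} (v a b : Fin n → ℝ) (ha : ∀ i, a i = 0 ∨ a i = 1)
    (hb : ∀ i, b i = 0 ∨ b i = 1) (hab : ∑ k, b k = ∑ k, a k)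
    (hv : ∀ i j, a i = 0 → a j = 1 → v i ≤ v j) :
    ∑ k, v k * b k ≤ ∑ k, v k * a k := by
  obtain ⟨c, hc0, hc1⟩ : ∃ c, (∀ i, a i = 0 → v i ≤ c) ∧ ∀ j, a j = 1 → c ≤ v j := by
    by_cases h : (univ.filter fun i => a i = 0).Nonempty
    · obtain ⟨m, hm, hmax⟩ := exists_max_image _ v h
      simp only [mem_filter, mem_univ, true_and] at hm hmax
      exact ⟨v m, hmax, fun j hj => hv m j hm hj⟩
    · obtain ⟨c, hc⟩ := (Set.finite_range v).bddBelow
      refine ⟨c, fun i hi => (h ⟨i, by simpa using hi⟩).elim, fun j _ => hc ⟨j, rfl⟩⟩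
  -- Subtracting the threshold makes the comparison hold term by term.
  have h : ∑ k, (v k - c) * b k ≤ ∑ k, (v k - c) * a k := by
    refine sum_le_sum fun k _ => ?_
    rcases ha k with h | h <;> rcases hb k with h' | h' <;> rw [h, h']
    · linarith [hc0 k h]
    · linarith [hc1 k h]
  simp only [sub_mul, sum_sub_distrib, ← mul_sum, hab] at h
  linarith

/-- Lemma 4 (Set Equivalence 2): for every q ∈ Q, A*_{q|g} = B*_{q|g}, i.e. an
allocator a ∈ A*_q maximizes t̄'_g over A*_q if and only if its crossing set
C_{2,0}(a) is empty. -/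
theorem set_equivalence_two
    (n : ℕ) (hn : 1 ≤ n)
    (sg sb : Fin n → ℝ)
    (hsg : ∀ i, sg i = 0 ∨ sg i = 1) (hsb : ∀ i, sb i = 0 ∨ sb i = 1)
    (q : ℝ) (hq : ∃ k : ℕ, 1 ≤ k ∧ k ≤ n ∧ q = (k : ℝ) / n)
    (a : Fin n → ℝ) (ha : memAstar n q sg sb a) :
    (∀ b : Fin n → ℝ, memAstar n q sg sb b → tbarg n sg b ≤ tbarg n sg a)
      ↔
    (∀ i j, inZ2 n sg sb i → inZ0 n sg sb j → ¬ a i < a j) := by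
  have hpos : (0 : ℝ) < 1 / (n : ℝ) := by
    have : (0 : ℝ) < n := by exact_mod_cast hn
    positivity
  constructor
  · rintro hmax i j ⟨hgi, hbi⟩ ⟨hgj, hbj⟩ hlt
    have hb : memAstar n q sg sb (fun k => a (Equiv.swap i j k)) := by
      refine ⟨isQAlloc_swap ha.1 i j, fun b hb => (ha.2 b hb).trans (le_of_eq ?_)⟩
      rw [tbar_eq, tbar_eq, sum_mul_swap (fun k => sg k - sb k), hgi, hbi, hgj, hbj]
      ring
    have h := le_of_mul_le_mul_left (hmax _ hb) hpos
    rw [sum_mul_swap, hgi, hgj] at h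
    linarith
  · intro hcross b hb
    have hw : ∀ i j, a i = 0 → a j = 1 → sg i - sb i ≤ sg j - sb j := by
      intro i j hi hj
      have h := ha.2 _ (isQAlloc_swap ha.1 i j)
      rw [tbar_eq, tbar_eq] at h
      have h := le_of_mul_le_mul_left h hpos
      rw [sum_mul_swap (fun k => sg k - sb k), hi, hj] at h
      linarith
    have hv : ∀ i j, a i = 0 → a j = 1 →
        (sg i - sb i) + sg i ≤ (sg j - sb j) + sg j := by
      intro i j hi hj
      have h1 := hw i j hi hj
      have h2 : ¬ (inZ2 n sg sb i ∧ inZ0 n sg sb j) := fun h =>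
        hcross i j h.1 h.2 (by rw [hi, hj]; exact one_pos)
      -- Values of `w` are integers, so `w + sg` can fail to be ordered only where `w i = w j`;
      -- then `sg i > sg j` forces `i ∈ Z_2` and `j ∈ Z_0`.
      rcases hsg i with e1 | e1 <;> rcases hsb i with e2 | e2 <;>
        rcases hsg j with e3 | e3 <;> rcases hsb j with e4 | e4 <;>
        first | linarith | exact absurd ⟨⟨e1, e2⟩, ⟨e3, e4⟩⟩ h2
    have hsum : ∑ k, b k = ∑ k, a k :=
      mul_left_cancel₀ hpos.ne' (hb.1.2.trans ha.1.2.symm)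
    have hweq : tbar n sg sb a = tbar n sg sb b := le_antisymm (hb.2 a ha.1) (ha.2 b hb.1)
    rw [tbar_eq, tbar_eq] at hweq
    have hweq := mul_left_cancel₀ hpos.ne' hweq
    have h := sum_mul_le_of_ordered (fun k => (sg k - sb k) + sg k) a b ha.1.1 hb.1.1 hsum hv
    simp only [add_mul, sum_add_distrib] at h
    exact mul_le_mul_of_nonneg_left (by linarith) hpos.le
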